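/- arXiv:1508.07920 — 2 statements merged into one kernel-verified Lean document; each statement's English description precedes it below -/
import Mathlib

section
/- Let p_{QXZ} = p_Q p_{X|Q} p_{Z|X} be a joint probability mass function on finite sets Q × X × Z, where p_{Z|X} is a discrete memoryless channel. Fix rates R₀, R_c, R_p > 0 and construct a random codebook C_n as follows: generate sequences Q^n(i), i ∈ {1,…,2^{nR₀}}, i.i.d. according to the product of p_Q; for each i, generate sequences X^n(i,j,s), j ∈ {1,…,2^{nR_c}}, s ∈ {1,…,2^{nR_p}}, conditionally independent with each coordinate t distributed according to p_{X|Q = Q_t(i)}. Let M₀, M_c, M_p be mutually independent messages independent of the codebook, with M_p ∈ {1,…,2^{nR_p}} having a given (not necessarily uniform) distribution, transmit X^n(M₀, M_c, M_p) through the memoryless channel p_{Z|X} to produce Z^n. If lim_{n→∞} (1/n) H₂(M_p) > I(X;Z|Q), then there exists β > 0 such that for all sufficiently large n, E_{C_n}[ V(p_{M_c Z^n}, p_{M_c} p_{Z^n}) ] ≤ 2^{−βn}. -/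
open Finset Filter Real

attribute [local instance] Classical.propDecidable

noncomputable section

/-- `p` is a probability mass function on the finite type `α`. -/
def IsPMF {α : Type*} [Fintype α] (p : α → ℝ) : Prop :=
  (∀ a, 0 ≤ p a) ∧ ∑ a, p a = 1

/-- i.i.d. (product) distribution of `n` copies of a source with pmf `p`. -/
def iid {α : Type*} [Fintype α] (p : α → ℝ) (n : ℕ) : (Fin n → α) → ℝ :=
  fun x => ∏ i, p (x i)

/-- variational distance between two pmfs -/
def VD {α : Type*} [Fintype α] (p q : α → ℝ) : ℝ := ∑ a, |p a - q a|

/-- Shannon entropy, base 2 -/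
def Hsh {α : Type*} [Fintype α] (p : α → ℝ) : ℝ := - ∑ a, p a * Real.logb 2 (p a)

/-- Rényi entropy of order 2, base 2 -/
def H2 {α : Type*} [Fintype α] (p : α → ℝ) : ℝ := - Real.logb 2 (∑ a, (p a) ^ 2)

/-- min-entropy, base 2 -/
def Hinf {α : Type*} [Fintype α] (p : α → ℝ) : ℝ := - Real.logb 2 (⨆ a, p a)

/-- Kullback–Leibler divergence, base 2 -/
def KL {α : Type*} [Fintype α] (p q : α → ℝ) : ℝ := ∑ a, p a * Real.logb 2 (p a / q a)

/-- pushforward of a pmf along a map -/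
def push {α β : Type*} [Fintype α] [Fintype β] (p : α → ℝ) (f : α → β) : β → ℝ :=
  fun b => ∑ a, if f a = b then p a else 0

/-- conditional mutual information `I(X;Y|Q)` of a joint pmf on `Q × X × Y`, base 2:
`I(X;Y|Q) = H(Q,X) + H(Q,Y) - H(Q) - H(Q,X,Y)`. -/
def condMI {Q X Y : Type*} [Fintype Q] [Fintype X] [Fintype Y] (p : Q × X × Y → ℝ) : ℝ :=
  Hsh (fun qx : Q × X => ∑ y, p (qx.1, qx.2, y))
    + Hsh (fun qy : Q × Y => ∑ x, p (qy.1, x, qy.2))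
    - Hsh (fun q : Q => ∑ x, ∑ y, p (q, x, y))
    - Hsh p

/-- the set of `ε`-letter-typical sequences of length `n` -/
def typ {α : Type*} [Fintype α] (p : α → ℝ) (n : ℕ) (ε : ℝ) : Finset (Fin n → α) :=
  Finset.univ.filter fun x =>
    ∀ a, |((Finset.univ.filter fun i => x i = a).card : ℝ) / n - p a| ≤ ε * p a

/-- cumulative distribution function of the standard normal distribution -/
def stdΦ (x : ℝ) : ℝ := ∫ t in Set.Iic x, Real.exp (-(t ^ 2) / 2) / Real.sqrt (2 * Real.pi)

/-- `⌈2^r⌉₊`, the size of a message set `{1,…,2^r}` -/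
def e2 (r : ℝ) : ℕ := ⌈(2:ℝ) ^ r⌉₊

/-!
The law of `Z^n` given `M_c = j` is compared with the same reference law for every `j`, namely the
mixture over `i` of the laws of `Z^n` given `Q^n(i)`. By the triangle inequality the leakage is at
most twice the mean distance, and by convexity and symmetry of the codebook this reduces to a
one-shot soft covering problem: how well the output of a channel with input law `p` is approximated
by a random codebook of `p`-distributed inputs used with weights `w`.

Truncate the channel where the likelihood ratio `V(z|x) / (pV)(z)` exceeds `T`. The kept part
deviates from its mean by at most `√(T ∑ w²)` on average, by a variance computation, and the
discarded part contributes at most twice its probability. Take `T = 2 ^ (c * n)` with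
`I(X;Z|Q) < c` and `c` below the rate of `H₂(M_p)`: the first term decays because
`∑ w² = 2 ^ (-H₂)`, the second by a Chernoff bound, because the `θ`-th moment of the single-letter
ratio `2 ^ (-c) V(z|x) / (pV)(z)` is `1` at `θ = 0` with negative derivative
`(I(X;Z|Q) - c) log 2`.
-/

section ProductSums

variable {ι R : Type*} {α : ι → Type*} [Fintype ι] [DecidableEq ι] [∀ i, Fintype (α i)]

theorem sum_prod_mul_prod [CommSemiring R] (p g : ∀ i, α i → R) :
    ∑ f : ∀ i, α i, (∏ i, p i (f i)) * ∏ i, g i (f i) = ∏ i, ∑ a, p i a * g i a := by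
  simp only [← prod_mul_distrib, Fintype.prod_sum]

theorem sum_prod_mul_apply [CommSemiring R] {p : ∀ i, α i → R} (hp : ∀ i, ∑ a, p i a = 1)
    (i₀ : ι) (g : α i₀ → R) :
    ∑ f : ∀ i, α i, (∏ i, p i (f i)) * g (f i₀) = ∑ a, p i₀ a * g a := by
  let G : ∀ i, α i → R := Function.update (fun _ _ => 1) i₀ g
  have G_apply (f : ∀ i, α i) : ∏ i, G i (f i) = g (f i₀) := by
    rw [Fintype.prod_eq_single i₀ fun i hi => by simp only [G, Function.update_of_ne hi]]
    simp only [G, Function.update_self]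
  simp only [← G_apply, sum_prod_mul_prod]
  rw [Fintype.prod_eq_single i₀ fun i hi => by simp only [G, Function.update_of_ne hi, mul_one, hp]]
  simp only [G, Function.update_self]

theorem sum_prod_mul_apply_mul_apply [CommSemiring R] {p : ∀ i, α i → R}
    (hp : ∀ i, ∑ a, p i a = 1) {i₀ i₁ : ι} (hne : i₀ ≠ i₁) (g : α i₀ → R) (k : α i₁ → R) :
    ∑ f : ∀ i, α i, (∏ i, p i (f i)) * (g (f i₀) * k (f i₁)) =
      (∑ a, p i₀ a * g a) * ∑ a, p i₁ a * k a := by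
  let G : ∀ i, α i → R := Function.update (Function.update (fun _ _ => 1) i₁ k) i₀ g
  have G_left : G i₀ = g := Function.update_self ..
  have G_right : G i₁ = k := by simp only [G, Function.update_of_ne hne.symm, Function.update_self]
  have G_other {i : ι} (hi : i ≠ i₀ ∧ i ≠ i₁) (a : α i) : G i a = 1 := by
    simp only [G, Function.update_of_ne hi.1, Function.update_of_ne hi.2]
  have G_apply (f : ∀ i, α i) : ∏ i, G i (f i) = g (f i₀) * k (f i₁) := by
    rw [Fintype.prod_eq_mul i₀ i₁ hne fun i hi => G_other hi _, G_left, G_right]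
  simp only [← G_apply, sum_prod_mul_prod]
  rw [Fintype.prod_eq_mul i₀ i₁ hne fun i hi => by simp only [G_other hi, mul_one, hp],
    G_left, G_right]

theorem IsPMF.pi {p : ∀ i, α i → ℝ} (hp : ∀ i, IsPMF (p i)) :
    IsPMF fun f : ∀ i, α i => ∏ i, p i (f i) :=
  ⟨fun f => prod_nonneg fun i _ => (hp i).1 (f i), by
    rw [← Fintype.prod_sum, prod_eq_one fun i _ => (hp i).2]⟩

end ProductSums

section WeightedSamples

variable {S α : Type*} [Fintype S] [Fintype α]

theorem sum_prod_mul_sq_weighted_sum {R : Type*} [CommSemiring R] [DecidableEq S] {p : α → R}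
    (hp : ∑ a, p a = 1) {g : α → R} (hg : ∑ a, p a * g a = 0) (w : S → R) :
    ∑ f : S → α, (∏ s, p (f s)) * (∑ s, w s * g (f s)) ^ 2 =
      (∑ s, w s ^ 2) * ∑ a, p a * g a ^ 2 := by
  have covariance (s s' : S) :
      ∑ f : S → α, (∏ s, p (f s)) * (g (f s) * g (f s')) =
        if s = s' then ∑ a, p a * g a ^ 2 else 0 := by
    split_ifs with h
    · subst h
      simpa only [sq] using
        sum_prod_mul_apply (p := fun _ : S => p) (fun _ => hp) s fun a => g a * g a
    · rw [sum_prod_mul_apply_mul_apply (p := fun _ : S => p) (fun _ => hp) h g g, hg, zero_mul]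
  calc ∑ f : S → α, (∏ s, p (f s)) * (∑ s, w s * g (f s)) ^ 2
      = ∑ f : S → α, ∑ s, ∑ s', w s * w s' * ((∏ s, p (f s)) * (g (f s) * g (f s'))) := by
        refine sum_congr rfl fun f _ => ?_
        rw [sq, sum_mul_sum]
        simp only [mul_sum]
        exact sum_congr rfl fun s _ => sum_congr rfl fun s' _ => by ring
    _ = ∑ s, ∑ s', w s * w s' * ∑ f : S → α, (∏ s, p (f s)) * (g (f s) * g (f s')) := by
        rw [sum_comm]
        refine sum_congr rfl fun s _ => ?_
        rw [sum_comm]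
        simp only [mul_sum]
    _ = (∑ s, w s ^ 2) * ∑ a, p a * g a ^ 2 := by
        simp only [covariance, mul_ite, mul_zero, sum_ite_eq, mem_univ, if_true, ← sq, sum_mul]

theorem sum_mul_sub_mean_sq_le {p : α → ℝ} (hp : ∑ a, p a = 1) (g : α → ℝ) :
    ∑ a, p a * (g a - ∑ b, p b * g b) ^ 2 ≤ ∑ a, p a * g a ^ 2 := by
  set m := ∑ b, p b * g b with hm
  have variance : ∑ a, p a * (g a - m) ^ 2 = ∑ a, p a * g a ^ 2 - m ^ 2 := by
    have expand (a : α) : p a * (g a - m) ^ 2 =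
        p a * g a ^ 2 - 2 * m * (p a * g a) + m ^ 2 * p a := by ring
    simp only [expand, sum_sub_distrib, sum_add_distrib, ← mul_sum, hp, ← hm]
    ring
  linarith [sq_nonneg m]

theorem IsPMF.sum_mul_abs_le_sqrt {p : α → ℝ} (hp : IsPMF p) (g : α → ℝ) :
    ∑ a, p a * |g a| ≤ √(∑ a, p a * g a ^ 2) := by
  refine le_sqrt_of_sq_le ?_
  simpa only [sq_abs] using pow_arith_mean_le_arith_mean_pow univ p (fun a => |g a|)
    (fun a _ => hp.1 a) hp.2 (fun a _ => abs_nonneg (g a)) 2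

theorem IsPMF.sum_prod_mul_abs_sub_mean_le_sqrt [DecidableEq S] {p : α → ℝ} (hp : IsPMF p)
    {w : S → ℝ} (hw : ∑ s, w s = 1) (g : α → ℝ) :
    ∑ f : S → α, (∏ s, p (f s)) * |∑ s, w s * g (f s) - ∑ a, p a * g a| ≤
      √((∑ s, w s ^ 2) * ∑ a, p a * g a ^ 2) := by
  set m := ∑ a, p a * g a with hm
  have centred : ∑ a, p a * (g a - m) = 0 := by
    simp only [mul_sub, sum_sub_distrib, ← sum_mul, hp.2, ← hm]
    ring
  have deviation (f : S → α) : ∑ s, w s * g (f s) - m = ∑ s, w s * (g (f s) - m) := by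
    simp only [mul_sub, sum_sub_distrib, ← sum_mul, hw, one_mul]
  simp only [deviation]
  refine ((IsPMF.pi fun _ : S => hp).sum_mul_abs_le_sqrt _).trans (sqrt_le_sqrt ?_)
  rw [sum_prod_mul_sq_weighted_sum hp.2 centred]
  exact mul_le_mul_of_nonneg_left (sum_mul_sub_mean_sq_le hp.2 g)
    (sum_nonneg fun _ _ => sq_nonneg _)

theorem IsPMF.sum_prod_mul_abs_sub_mean_le_two_mul [DecidableEq S] {p : α → ℝ} (hp : IsPMF p)
    {w : S → ℝ} (hw : IsPMF w) {g : α → ℝ} (hg : ∀ a, 0 ≤ g a) :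
    ∑ f : S → α, (∏ s, p (f s)) * |∑ s, w s * g (f s) - ∑ a, p a * g a| ≤
      2 * ∑ a, p a * g a := by
  set m := ∑ a, p a * g a with hm
  have hm0 : 0 ≤ m := sum_nonneg fun a _ => mul_nonneg (hp.1 a) (hg a)
  have mean : ∑ f : S → α, (∏ s, p (f s)) * ∑ s, w s * g (f s) = m := by
    simp only [mul_sum, mul_left_comm _ (w _)]
    rw [sum_comm]
    simp only [← mul_sum, sum_prod_mul_apply (p := fun _ : S => p) (fun _ => hp.2) _ g, ← hm,
      ← sum_mul, hw.2, one_mul]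
  calc ∑ f : S → α, (∏ s, p (f s)) * |∑ s, w s * g (f s) - m|
      ≤ ∑ f : S → α, (∏ s, p (f s)) * (∑ s, w s * g (f s) + m) := by
        refine sum_le_sum fun f _ => mul_le_mul_of_nonneg_left ?_ (prod_nonneg fun s _ => hp.1 _)
        have : 0 ≤ ∑ s, w s * g (f s) := sum_nonneg fun s _ => mul_nonneg (hw.1 s) (hg _)
        exact abs_sub_le_of_nonneg_of_le this (by linarith) hm0 (by linarith)
    _ = 2 * m := by
        simp only [mul_add, sum_add_distrib, ← sum_mul, mean,
          (IsPMF.pi fun _ : S => hp).2]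
        ring

theorem sum_mul_truncation_sq_le {p v : α → ℝ} (hp : ∀ a, 0 ≤ p a) (hv : ∀ a, 0 ≤ v a) {B : ℝ}
    (hB : 0 ≤ B) : ∑ a, p a * (if B < v a then 0 else v a) ^ 2 ≤ B * ∑ a, p a * v a := by
  rw [mul_sum]
  refine sum_le_sum fun a _ => ?_
  rw [mul_left_comm]
  refine mul_le_mul_of_nonneg_left ?_ (hp a)
  split_ifs with h
  · simpa only [zero_pow two_ne_zero] using mul_nonneg hB (hv a)
  · rw [sq]
    exact mul_le_mul_of_nonneg_right (not_lt.1 h) (hv a)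

theorem IsPMF.sum_prod_mul_abs_sub_mean_le_truncation [DecidableEq S] {p : α → ℝ} (hp : IsPMF p)
    {w : S → ℝ} (hw : IsPMF w) {v : α → ℝ} (hv : ∀ a, 0 ≤ v a) {m T : ℝ}
    (hm : ∑ a, p a * v a = m) (hT : 0 ≤ T) :
    ∑ f : S → α, (∏ s, p (f s)) * |∑ s, w s * v (f s) - m| ≤
      m * √(T * ∑ s, w s ^ 2) + 2 * ∑ a, if T * m < v a then p a * v a else 0 := by
  have hm0 : 0 ≤ m := hm ▸ sum_nonneg fun a _ => mul_nonneg (hp.1 a) (hv a)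
  set low : α → ℝ := fun a => if T * m < v a then 0 else v a with hlow
  set high : α → ℝ := fun a => if T * m < v a then v a else 0 with hhigh
  have split (a : α) : v a = low a + high a := by
    simp only [hlow, hhigh]; split_ifs <;> simp
  have high_nonneg (a : α) : 0 ≤ high a := by
    simp only [hhigh]; split_ifs <;> simp [hv a]
  have triangle (f : S → α) : |∑ s, w s * v (f s) - m| ≤
      |∑ s, w s * low (f s) - ∑ a, p a * low a| +
        |∑ s, w s * high (f s) - ∑ a, p a * high a| := by
    refine le_of_eq_of_le (congrArg abs ?_) (abs_add_le _ _)
    simp only [← hm, split, mul_add, sum_add_distrib]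
    ring
  have low_sq : (∑ s, w s ^ 2) * ∑ a, p a * low a ^ 2 ≤ m ^ 2 * (T * ∑ s, w s ^ 2) := by
    calc (∑ s, w s ^ 2) * ∑ a, p a * low a ^ 2 ≤ (∑ s, w s ^ 2) * (T * m * m) := by
          gcongr
          simpa only [hm] using sum_mul_truncation_sq_le hp.1 hv (mul_nonneg hT hm0)
      _ = m ^ 2 * (T * ∑ s, w s ^ 2) := by ring
  have low_dev : √((∑ s, w s ^ 2) * ∑ a, p a * low a ^ 2) ≤ m * √(T * ∑ s, w s ^ 2) := by
    simpa only [sqrt_mul (sq_nonneg m), sqrt_sq hm0] using sqrt_le_sqrt low_sq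
  have high_mean : ∑ a, p a * high a = ∑ a, if T * m < v a then p a * v a else 0 := by
    simp only [hhigh, mul_ite, mul_zero]
  calc ∑ f : S → α, (∏ s, p (f s)) * |∑ s, w s * v (f s) - m|
      ≤ ∑ f : S → α, (∏ s, p (f s)) * |∑ s, w s * low (f s) - ∑ a, p a * low a| +
          ∑ f : S → α, (∏ s, p (f s)) * |∑ s, w s * high (f s) - ∑ a, p a * high a| := by
        rw [← sum_add_distrib]
        simp only [← mul_add]
        exact sum_le_sum fun f _ =>
          mul_le_mul_of_nonneg_left (triangle f) (prod_nonneg fun s _ => hp.1 _)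
    _ ≤ m * √(T * ∑ s, w s ^ 2) + 2 * ∑ a, if T * m < v a then p a * v a else 0 :=
        add_le_add ((hp.sum_prod_mul_abs_sub_mean_le_sqrt hw.2 low).trans low_dev)
          (high_mean ▸ hp.sum_prod_mul_abs_sub_mean_le_two_mul hw high_nonneg)

end WeightedSamples

/-- The output distribution `∑ₐ p(a) V(·|a)` of the channel `V` with input distribution `p`, which
is also the mixture of the distributions `V a` with weights `p a`. -/
def outputDist {α ζ : Type*} [Fintype α] (p : α → ℝ) (V : α → ζ → ℝ) (z : ζ) : ℝ :=
  ∑ a, p a * V a z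

/-- The memoryless channel that applies `V` independently in each coordinate. -/
def prodChannel {ι α ζ : Type*} [Fintype ι] (V : α → ζ → ℝ) (x : ι → α) (z : ι → ζ) : ℝ :=
  ∏ i, V (x i) (z i)

section OutputDist

variable {α ζ : Type*} [Fintype α] {p : α → ℝ} {V : α → ζ → ℝ}

theorem outputDist_nonneg (hp : ∀ a, 0 ≤ p a) (hV : ∀ a z, 0 ≤ V a z) (z : ζ) :
    0 ≤ outputDist p V z :=
  sum_nonneg fun a _ => mul_nonneg (hp a) (hV a z)

theorem outputDist_pos (hp : ∀ a, 0 ≤ p a) (hV : ∀ a z, 0 ≤ V a z) {a : α} {z : ζ}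
    (h : p a * V a z ≠ 0) : 0 < outputDist p V z :=
  sum_pos' (fun b _ => mul_nonneg (hp b) (hV b z))
    ⟨a, mem_univ a, (mul_nonneg (hp a) (hV a z)).lt_of_ne' h⟩

theorem outputDist_const (hp : ∑ a, p a = 1) (q : ζ → ℝ) : outputDist p (fun _ => q) = q := by
  ext z
  simp only [outputDist, ← sum_mul, hp, one_mul]

theorem sum_outputDist [Fintype ζ] (hp : ∑ a, p a = 1) (hV : ∀ a, ∑ z, V a z = 1) :
    ∑ z, outputDist p V z = 1 := by
  simp only [outputDist]
  rw [sum_comm]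
  simp only [← mul_sum, hV, mul_one, hp]

theorem outputDist_prodChannel {ι κ : Type*} [Fintype ι] [DecidableEq ι] (P : κ → α → ℝ)
    (V : α → ζ → ℝ) (q : ι → κ) :
    outputDist (prodChannel P q) (prodChannel V) = prodChannel (fun k => outputDist (P k) V) q := by
  ext z
  simp only [outputDist, prodChannel, ← prod_mul_distrib, Fintype.prod_sum]

end OutputDist

section VariationalDistance

variable {ι ζ : Type*} [Fintype ι] [Fintype ζ]

theorem VD_comm (p q : ζ → ℝ) : VD p q = VD q p :=
  sum_congr rfl fun z _ => abs_sub_comm (p z) (q z)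

theorem VD_triangle (p q r : ζ → ℝ) : VD p r ≤ VD p q + VD q r := by
  simp only [VD, ← sum_add_distrib]
  exact sum_le_sum fun z _ => abs_sub_le (p z) (q z) (r z)

theorem VD_outputDist_le {p : ι → ℝ} (hp : ∀ i, 0 ≤ p i) (A B : ι → ζ → ℝ) :
    VD (outputDist p A) (outputDist p B) ≤ ∑ i, p i * VD (A i) (B i) := by
  simp only [VD, mul_sum]
  rw [sum_comm]
  refine sum_le_sum fun z _ => ?_
  calc |outputDist p A z - outputDist p B z| = |∑ i, p i * (A i z - B i z)| := by
        simp only [outputDist, mul_sub, sum_sub_distrib]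
    _ ≤ ∑ i, |p i * (A i z - B i z)| := abs_sum_le_sum_abs _ _
    _ = ∑ i, p i * |A i z - B i z| :=
        sum_congr rfl fun i _ => by rw [abs_mul, abs_of_nonneg (hp i)]

/-- The variational distance `V(p_{JZ}, p_J p_Z)` of the joint distribution of an input `J` of
distribution `p` and its output `Z` through the channel `A` to the product of its marginals. -/
def dependence (p : ι → ℝ) (A : ι → ζ → ℝ) : ℝ :=
  ∑ j, ∑ z, |p j * A j z - p j * outputDist p A z|

theorem dependence_le {p : ι → ℝ} (hp : IsPMF p) (A : ι → ζ → ℝ) (q : ζ → ℝ) :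
    dependence p A ≤ 2 * ∑ j, p j * VD (A j) q := by
  have output_le : VD q (outputDist p A) ≤ ∑ j, p j * VD (A j) q := by
    simpa only [outputDist_const hp.2, VD_comm q] using VD_outputDist_le hp.1 (fun _ => q) A
  calc dependence p A = ∑ j, p j * VD (A j) (outputDist p A) := by
        simp only [dependence, VD, mul_sum, ← mul_sub, abs_mul, abs_of_nonneg (hp.1 _)]
    _ ≤ ∑ j, p j * (VD (A j) q + VD q (outputDist p A)) :=
        sum_le_sum fun j _ => mul_le_mul_of_nonneg_left (VD_triangle _ _ _) (hp.1 j)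
    _ = ∑ j, p j * VD (A j) q + VD q (outputDist p A) := by
        simp only [mul_add, sum_add_distrib, ← sum_mul, hp.2, one_mul]
    _ ≤ 2 * ∑ j, p j * VD (A j) q := by linarith

end VariationalDistance

section SoftCovering

variable {α ζ : Type*} [Fintype α] {p : α → ℝ} {V : α → ζ → ℝ}

/-- The likelihood ratio `V(z|a) / (pV)(z)`, whose logarithm is the information density; it is `0`
where the output probability `(pV)(z)` vanishes. -/
def likelihoodRatio (p : α → ℝ) (V : α → ζ → ℝ) (a : α) (z : ζ) : ℝ := V a z / outputDist p V z

theorem likelihoodRatio_nonneg (hp : ∀ a, 0 ≤ p a)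
    (hV : ∀ a z, 0 ≤ V a z) (a : α) (z : ζ) : 0 ≤ likelihoodRatio p V a z :=
  div_nonneg (hV a z) (outputDist_nonneg hp hV z)

theorem likelihoodRatio_pos (hp : ∀ a, 0 ≤ p a)
    (hV : ∀ a z, 0 ≤ V a z) {a : α} {z : ζ} (h : p a * V a z ≠ 0) :
    0 < likelihoodRatio p V a z :=
  div_pos ((hV a z).lt_of_ne' (right_ne_zero_of_mul h)) (outputDist_pos hp hV h)

variable [Fintype ζ]

/-- The probability that an input of distribution `p` and its output through `V` have likelihood
ratio above `T`. The division is cleared, so that the condition is also correct at outputs of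
probability `0`. -/
def ratioTail (p : α → ℝ) (V : α → ζ → ℝ) (T : ℝ) : ℝ :=
  ∑ a, ∑ z, if T * outputDist p V z < V a z then p a * V a z else 0

/-- The moment of order `θ` of the likelihood ratio in units of `T`. -/
def ratioMoment (p : α → ℝ) (V : α → ζ → ℝ) (T θ : ℝ) : ℝ :=
  ∑ a, ∑ z, p a * V a z * (likelihoodRatio p V a z / T) ^ θ

theorem soft_covering {S : Type*} [Fintype S] [DecidableEq S] (hp : IsPMF p)
    {w : S → ℝ} (hw : IsPMF w) (hV : ∀ a, IsPMF (V a)) {T : ℝ} (hT : 0 ≤ T) :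
    ∑ f : S → α, (∏ s, p (f s)) * VD (outputDist w fun s => V (f s)) (outputDist p V) ≤
      √(T * ∑ s, w s ^ 2) + 2 * ratioTail p V T := by
  calc ∑ f : S → α, (∏ s, p (f s)) * VD (outputDist w fun s => V (f s)) (outputDist p V)
      = ∑ z, ∑ f : S → α, (∏ s, p (f s)) * |∑ s, w s * V (f s) z - outputDist p V z| := by
        simp only [VD, mul_sum]
        exact sum_comm
    _ ≤ ∑ z, (outputDist p V z * √(T * ∑ s, w s ^ 2) +
          2 * ∑ a, if T * outputDist p V z < V a z then p a * V a z else 0) :=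
        sum_le_sum fun z _ => hp.sum_prod_mul_abs_sub_mean_le_truncation hw
          (fun a => (hV a).1 z) rfl hT
    _ = √(T * ∑ s, w s ^ 2) + 2 * ratioTail p V T := by
        rw [sum_add_distrib, ← sum_mul, sum_outputDist hp.2 fun a => (hV a).2, one_mul,
          ← mul_sum, ratioTail, sum_comm]

theorem ratioMoment_nonneg (hp : ∀ a, 0 ≤ p a)
    (hV : ∀ a z, 0 ≤ V a z) {T : ℝ} (hT : 0 ≤ T) (θ : ℝ) : 0 ≤ ratioMoment p V T θ :=
  sum_nonneg fun a _ => sum_nonneg fun z _ => mul_nonneg (mul_nonneg (hp a) (hV a z))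
    (rpow_nonneg (div_nonneg (likelihoodRatio_nonneg hp hV a z) hT) θ)

theorem ratioTail_le_ratioMoment (hp : ∀ a, 0 ≤ p a)
    (hV : ∀ a z, 0 ≤ V a z) {T θ : ℝ} (hT : 0 < T) (hθ : 0 ≤ θ) :
    ratioTail p V T ≤ ratioMoment p V T θ := by
  refine sum_le_sum fun a _ => sum_le_sum fun z _ => ?_
  have hpV : 0 ≤ p a * V a z := mul_nonneg (hp a) (hV a z)
  split_ifs with h
  · rcases eq_or_ne (p a * V a z) 0 with h0 | h0
    · simp only [h0, zero_mul, le_refl]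
    · refine le_mul_of_one_le_right hpV (one_le_rpow ?_ hθ)
      rw [likelihoodRatio, div_div, mul_comm,
        one_le_div (mul_pos hT (outputDist_pos hp hV h0))]
      exact h.le
  · exact mul_nonneg hpV (rpow_nonneg (div_nonneg (likelihoodRatio_nonneg hp hV a z) hT.le) θ)

theorem ratioMoment_prodChannel {ι κ : Type*} [Fintype ι] [DecidableEq ι] {P : κ → α → ℝ}
    {V : α → ζ → ℝ} (hP : ∀ k a, 0 ≤ P k a) (hV : ∀ a z, 0 ≤ V a z) {T : ℝ} (hT : 0 ≤ T)
    (θ : ℝ) (q : ι → κ) :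
    ratioMoment (prodChannel P q) (prodChannel V) (T ^ Fintype.card ι) θ =
      ∏ i, ratioMoment (P (q i)) V T θ := by
  simp only [ratioMoment, Fintype.prod_sum]
  refine sum_congr rfl fun x _ => sum_congr rfl fun z _ => ?_
  have ratio : likelihoodRatio (prodChannel P q) (prodChannel V) x z / T ^ Fintype.card ι =
      ∏ i, likelihoodRatio (P (q i)) V (x i) (z i) / T := by
    simp only [likelihoodRatio, outputDist_prodChannel, prodChannel, prod_div_distrib, prod_const,
      card_univ]
  rw [ratio, ← finsetProd_rpow _ _ fun i _ =>
    div_nonneg (likelihoodRatio_nonneg (hP (q i)) hV (x i) (z i)) hT]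
  simp only [prodChannel, prod_mul_distrib]

theorem sum_iid_mul_ratioTail_le {κ : Type*} [Fintype κ] {pκ : κ → ℝ} {P : κ → α → ℝ}
    {V : α → ζ → ℝ} (hκ : ∀ k, 0 ≤ pκ k) (hP : ∀ k a, 0 ≤ P k a) (hV : ∀ a z, 0 ≤ V a z)
    {T θ : ℝ} (hT : 0 < T) (hθ : 0 ≤ θ) (n : ℕ) :
    ∑ q, iid pκ n q * ratioTail (prodChannel P q) (prodChannel V) (T ^ n) ≤
      (∑ k, pκ k * ratioMoment (P k) V T θ) ^ n := by
  calc ∑ q, iid pκ n q * ratioTail (prodChannel P q) (prodChannel V) (T ^ n)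
      ≤ ∑ q, iid pκ n q * ratioMoment (prodChannel P q) (prodChannel V) (T ^ n) θ :=
        sum_le_sum fun q _ => mul_le_mul_of_nonneg_left
          (ratioTail_le_ratioMoment (fun x => prod_nonneg fun i _ => hP (q i) (x i))
            (fun x z => prod_nonneg fun i _ => hV (x i) (z i)) (pow_pos hT n) hθ)
          (prod_nonneg fun i _ => hκ (q i))
    _ = ∑ q : Fin n → κ, ∏ i, pκ (q i) * ratioMoment (P (q i)) V T θ := by
        refine sum_congr rfl fun q _ => ?_
        have tensorize := ratioMoment_prodChannel hP hV hT.le θ q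
        rw [Fintype.card_fin] at tensorize
        rw [tensorize, iid, prod_mul_distrib]
    _ = (∑ k, pκ k * ratioMoment (P k) V T θ) ^ n := by
        rw [← Fintype.prod_sum fun _ k => pκ k * ratioMoment (P k) V T θ, prod_const, card_univ,
          Fintype.card_fin]

end SoftCovering

section Codebook

variable {I J S κ α ζ : Type*} [Fintype I] [Fintype J] [Fintype S]

/-- The probability of the superposition codebook `c = (Q(i), X(i,j,s))` with independent cloud
centres `Q(i)` of distribution `pκ` and independent satellites `X(i,j,s)` of distribution
`P (Q(i))`. -/
def codebookProb (pκ : κ → ℝ) (P : κ → α → ℝ) (c : (I → κ) × (I → J → S → α)) : ℝ :=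
  (∏ i, pκ (c.1 i)) * ∏ i, ∏ j, ∏ s, P (c.1 i) (c.2 i j s)

/-- The channel from the confidential message `j` to the output of `V` when the codeword `x i j s`
is sent, with independent `i` and `s` of distributions `p₀` and `w`. -/
def messageChannel (p₀ : I → ℝ) (w : S → ℝ) (V : α → ζ → ℝ) (x : I → J → S → α) (j : J) : ζ → ℝ :=
  outputDist p₀ fun i => outputDist w fun s => V (x i j s)

theorem dependence_messageChannel_le [Fintype ζ] {p₀ : I → ℝ} {pc : J → ℝ} (h₀ : ∀ i, 0 ≤ p₀ i)
    (hc : IsPMF pc) (w : S → ℝ) (V : α → ζ → ℝ) (x : I → J → S → α) (target : I → ζ → ℝ) :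
    dependence pc (messageChannel p₀ w V x) ≤
      2 * ∑ j, pc j * ∑ i, p₀ i * VD (outputDist w fun s => V (x i j s)) (target i) := by
  refine (dependence_le hc _ (outputDist p₀ target)).trans ?_
  gcongr with j
  · exact hc.1 j
  · exact VD_outputDist_le h₀ _ target

variable [Fintype κ] [Fintype α] [DecidableEq I] [DecidableEq J] [DecidableEq S]

theorem sum_codebookProb_mul_apply {pκ : κ → ℝ} (hκ : IsPMF pκ) {P : κ → α → ℝ}
    (hP : ∀ k, IsPMF (P k)) (φ : κ → (S → α) → ℝ) (i : I) (j : J) :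
    ∑ c : (I → κ) × (I → J → S → α), codebookProb pκ P c * φ (c.1 i) (c.2 i j) =
      ∑ k, pκ k * ∑ f : S → α, (∏ s, P k (f s)) * φ k f := by
  have satellites (k : κ) : IsPMF fun f : S → α => ∏ s, P k (f s) := IsPMF.pi fun _ => hP k
  have clouds (k : κ) : IsPMF fun y : J → S → α => ∏ j, ∏ s, P k (y j s) :=
    IsPMF.pi fun _ => satellites k
  have conditional (q : I → κ) :
      ∑ x : I → J → S → α, (∏ i, ∏ j, ∏ s, P (q i) (x i j s)) * φ (q i) (x i j) =
        ∑ f : S → α, (∏ s, P (q i) (f s)) * φ (q i) f := by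
    rw [sum_prod_mul_apply (p := fun i (y : J → S → α) => ∏ j, ∏ s, P (q i) (y j s))
      (fun i => (clouds (q i)).2) i fun y => φ (q i) (y j)]
    exact sum_prod_mul_apply (p := fun _ (f : S → α) => ∏ s, P (q i) (f s))
      (fun _ => (satellites (q i)).2) j (φ (q i))
  simp only [Fintype.sum_prod_type, codebookProb, mul_assoc, ← mul_sum, conditional]
  exact sum_prod_mul_apply (p := fun _ : I => pκ) (fun _ => hκ.2) i
    fun k => ∑ f : S → α, (∏ s, P k (f s)) * φ k f

theorem sum_codebookProb_mul_dependence_le [Fintype ζ] {p₀ : I → ℝ} {pc : J → ℝ} (h₀ : IsPMF p₀)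
    (hc : IsPMF pc) (w : S → ℝ) {pκ : κ → ℝ} (hκ : IsPMF pκ) {P : κ → α → ℝ}
    (hP : ∀ k, IsPMF (P k)) (V : α → ζ → ℝ) (target : κ → ζ → ℝ) :
    ∑ c : (I → κ) × (I → J → S → α),
        codebookProb pκ P c * dependence pc (messageChannel p₀ w V c.2) ≤
      2 * ∑ k, pκ k * ∑ f : S → α,
        (∏ s, P k (f s)) * VD (outputDist w fun s => V (f s)) (target k) := by
  let φ (k : κ) (f : S → α) : ℝ := VD (outputDist w fun s => V (f s)) (target k)
  calc ∑ c : (I → κ) × (I → J → S → α),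
        codebookProb pκ P c * dependence pc (messageChannel p₀ w V c.2)
      ≤ ∑ c : (I → κ) × (I → J → S → α),
          codebookProb pκ P c * (2 * ∑ j, pc j * ∑ i, p₀ i * φ (c.1 i) (c.2 i j)) :=
        sum_le_sum fun c _ => mul_le_mul_of_nonneg_left
          (dependence_messageChannel_le h₀.1 hc w V c.2 fun i => target (c.1 i))
          (mul_nonneg (prod_nonneg fun i _ => hκ.1 _) (prod_nonneg fun i _ =>
            prod_nonneg fun j _ => prod_nonneg fun s _ => (hP _).1 _))
    _ = 2 * ∑ j, pc j * ∑ i, p₀ i *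
          ∑ c : (I → κ) × (I → J → S → α), codebookProb pκ P c * φ (c.1 i) (c.2 i j) := by
        simp only [mul_sum]
        rw [sum_comm]
        refine sum_congr rfl fun j _ => ?_
        rw [sum_comm]
        exact sum_congr rfl fun i _ => sum_congr rfl fun c _ => by ring
    _ = 2 * ∑ k, pκ k * ∑ f : S → α, (∏ s, P k (f s)) * φ k f := by
        simp only [sum_codebookProb_mul_apply hκ hP φ, ← sum_mul, h₀.2, hc.2, one_mul]

end Codebook

theorem exists_sum_mul_rpow_lt_one {Λ : Type*} [Fintype Λ] {p ρ : Λ → ℝ} (hp : ∑ a, p a = 1)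
    (hρ : ∀ a, p a ≠ 0 → 0 < ρ a) (hneg : ∑ a, p a * log (ρ a) < 0) :
    ∃ θ : ℝ, 0 < θ ∧ ∑ a, p a * ρ a ^ θ < 1 := by
  have deriv_zero :
      HasDerivAt (fun θ : ℝ => ∑ a, p a * ρ a ^ θ) (∑ a, p a * log (ρ a)) 0 := by
    refine HasDerivAt.fun_sum fun a _ => ?_
    rcases eq_or_ne (p a) 0 with h | h
    · simpa only [h, zero_mul] using hasDerivAt_const (0 : ℝ) (0 : ℝ)
    · simpa only [rpow_zero, one_mul] using
        ((hasStrictDerivAt_const_rpow (hρ a h) 0).hasDerivAt).const_mul (p a)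
  have slope_neg : ∀ᶠ θ in nhdsWithin (0 : ℝ) (Set.Ioi 0),
      slope (fun θ : ℝ => ∑ a, p a * ρ a ^ θ) 0 θ < 0 :=
    ((hasDerivAt_iff_tendsto_slope.1 deriv_zero).mono_left
      (nhdsWithin_mono _ fun _ (hx : 0 < _) => hx.ne')).eventually_lt_const hneg
  obtain ⟨θ, hslope, hθ : 0 < θ⟩ := (slope_neg.and self_mem_nhdsWithin).exists
  refine ⟨θ, hθ, ?_⟩
  rw [slope_def_field, sub_zero, div_lt_iff₀ hθ] at hslope
  simp only [rpow_zero, mul_one, hp, zero_mul] at hslope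
  linarith

section ConditionalMutualInformation

/-- The joint distribution `p_Q p_{X|Q} p_{Z|X}` of a Markov chain `Q → X → Z`. -/
def markovJoint {Q X Z : Type*} (pQ : Q → ℝ) (P : Q → X → ℝ) (W : X → Z → ℝ) (t : Q × X × Z) :
    ℝ :=
  pQ t.1 * P t.1 t.2.1 * W t.2.1 t.2.2

variable {Q X Z : Type*} [Fintype X] {pQ : Q → ℝ} {P : Q → X → ℝ} {W : X → Z → ℝ}

theorem likelihoodRatio_pos_of_markovJoint_ne_zero (hP : ∀ q x, 0 ≤ P q x)
    (hW : ∀ x z, 0 ≤ W x z) {t : Q × X × Z} (ht : markovJoint pQ P W t ≠ 0) :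
    0 < likelihoodRatio (P t.1) W t.2.1 t.2.2 := by
  rw [markovJoint, mul_assoc] at ht
  exact likelihoodRatio_pos (hP t.1) hW (right_ne_zero_of_mul ht)

variable [Fintype Q] [Fintype Z]

theorem condMI_eq_sum (p : Q × X × Z → ℝ) :
    condMI p = ∑ t : Q × X × Z, p t * (logb 2 (p t) + logb 2 (∑ x, ∑ z, p (t.1, x, z)) -
      logb 2 (∑ z, p (t.1, t.2.1, z)) - logb 2 (∑ x, p (t.1, x, t.2.2))) := by
  have hQX : Hsh (fun qx : Q × X => ∑ z, p (qx.1, qx.2, z)) =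
      -∑ t : Q × X × Z, p t * logb 2 (∑ z, p (t.1, t.2.1, z)) := by
    simp only [Hsh, Fintype.sum_prod_type, sum_mul]
  have hQZ : Hsh (fun qz : Q × Z => ∑ x, p (qz.1, x, qz.2)) =
      -∑ t : Q × X × Z, p t * logb 2 (∑ x, p (t.1, x, t.2.2)) := by
    simp only [Hsh, Fintype.sum_prod_type, sum_mul]
    exact congrArg Neg.neg (sum_congr rfl fun q _ => sum_comm)
  have hQ : Hsh (fun q : Q => ∑ x, ∑ z, p (q, x, z)) =
      -∑ t : Q × X × Z, p t * logb 2 (∑ x, ∑ z, p (t.1, x, z)) := by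
    simp only [Hsh, Fintype.sum_prod_type, sum_mul]
  rw [condMI, hQX, hQZ, hQ, Hsh]
  simp only [mul_add, mul_sub, sum_add_distrib, sum_sub_distrib]
  ring

theorem isPMF_markovJoint (hQ : IsPMF pQ) (hP : ∀ q, IsPMF (P q)) (hW : ∀ x, IsPMF (W x)) :
    IsPMF (markovJoint pQ P W) :=
  ⟨fun _ => mul_nonneg (mul_nonneg (hQ.1 _) ((hP _).1 _)) ((hW _).1 _), by
    simp only [markovJoint, Fintype.sum_prod_type, ← mul_sum, (hW _).2, (hP _).2, mul_one, hQ.2]⟩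

theorem condMI_markovJoint (hP : ∀ q, IsPMF (P q)) (hW : ∀ x, IsPMF (W x)) :
    condMI (markovJoint pQ P W) =
      ∑ t, markovJoint pQ P W t * logb 2 (likelihoodRatio (P t.1) W t.2.1 t.2.2) := by
  have marginal_QX (q : Q) (x : X) : ∑ z, markovJoint pQ P W (q, x, z) = pQ q * P q x := by
    simp only [markovJoint, ← mul_sum, (hW x).2, mul_one]
  have marginal_Q (q : Q) : ∑ x, ∑ z, markovJoint pQ P W (q, x, z) = pQ q := by
    simp only [marginal_QX, ← mul_sum, (hP q).2, mul_one]
  have marginal_QZ (q : Q) (z : Z) :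
      ∑ x, markovJoint pQ P W (q, x, z) = pQ q * outputDist (P q) W z := by
    simp only [markovJoint, outputDist, mul_assoc, mul_sum]
  rw [condMI_eq_sum]
  refine sum_congr rfl fun t _ => ?_
  rcases eq_or_ne (markovJoint pQ P W t) 0 with ht | ht
  · simp only [ht, zero_mul]
  · have hqx := left_ne_zero_of_mul ht
    have hw := right_ne_zero_of_mul ht
    have hq := left_ne_zero_of_mul hqx
    have hout : outputDist (P t.1) W t.2.2 ≠ 0 :=
      (outputDist_pos (hP t.1).1 (fun x => (hW x).1)
        (mul_ne_zero (right_ne_zero_of_mul hqx) hw)).ne'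
    rw [marginal_Q, marginal_QX, marginal_QZ, markovJoint, likelihoodRatio, logb_mul hqx hw,
      logb_mul hq hout, logb_div hw hout]
    ring

theorem sum_markovJoint_mul_log_lt_zero (hQ : IsPMF pQ) (hP : ∀ q, IsPMF (P q))
    (hW : ∀ x, IsPMF (W x)) {c : ℝ} (hc : condMI (markovJoint pQ P W) < c) :
    ∑ t, markovJoint pQ P W t * log (likelihoodRatio (P t.1) W t.2.1 t.2.2 / 2 ^ c) < 0 := by
  have log_two_pos : 0 < log 2 := log_pos one_lt_two
  have log_ratio (t : Q × X × Z) :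
      markovJoint pQ P W t * log (likelihoodRatio (P t.1) W t.2.1 t.2.2 / 2 ^ c) =
        log 2 * (markovJoint pQ P W t * logb 2 (likelihoodRatio (P t.1) W t.2.1 t.2.2) -
          markovJoint pQ P W t * c) := by
    rcases eq_or_ne (markovJoint pQ P W t) 0 with ht | ht
    · simp only [ht, zero_mul, sub_zero, mul_zero]
    · have hpos := likelihoodRatio_pos_of_markovJoint_ne_zero (fun q => (hP q).1)
        (fun x => (hW x).1) ht
      rw [log_div hpos.ne' (by positivity), log_rpow two_pos, logb]
      field_simp
  simp only [log_ratio, ← mul_sum, sum_sub_distrib, ← condMI_markovJoint hP hW, ← sum_mul,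
    (isPMF_markovJoint hQ hP hW).2, one_mul]
  exact mul_neg_of_pos_of_neg log_two_pos (sub_neg.2 hc)

theorem exists_sum_mul_ratioMoment_lt_one (hQ : IsPMF pQ) (hP : ∀ q, IsPMF (P q))
    (hW : ∀ x, IsPMF (W x)) {c : ℝ} (hc : condMI (markovJoint pQ P W) < c) :
    ∃ θ : ℝ, 0 < θ ∧ ∑ q, pQ q * ratioMoment (P q) W (2 ^ c) θ < 1 := by
  obtain ⟨θ, hθ, hlt⟩ := exists_sum_mul_rpow_lt_one (isPMF_markovJoint hQ hP hW).2
    (fun t ht => div_pos (likelihoodRatio_pos_of_markovJoint_ne_zero (fun q => (hP q).1)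
      (fun x => (hW x).1) ht) (by positivity))
    (sum_markovJoint_mul_log_lt_zero hQ hP hW hc)
  refine ⟨θ, hθ, lt_of_eq_of_lt ?_ hlt⟩
  simp only [ratioMoment, markovJoint, Fintype.sum_prod_type, mul_sum, mul_assoc]

end ConditionalMutualInformation

theorem sum_sq_le_rpow_neg_of_le_H2 {S : Type*} [Fintype S] {w : S → ℝ} (hw : IsPMF w) {h : ℝ}
    (hh : h ≤ H2 w) : ∑ s, w s ^ 2 ≤ 2 ^ (-h) := by
  have sum_sq_pos : 0 < ∑ s, w s ^ 2 := by
    obtain ⟨s, -, hs⟩ := exists_ne_zero_of_sum_ne_zero (hw.2.trans_ne one_ne_zero)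
    exact sum_pos' (fun s _ => sq_nonneg (w s)) ⟨s, mem_univ s, by positivity⟩
  rw [← logb_le_iff_le_rpow one_lt_two sum_sq_pos]
  exact le_neg_of_le_neg hh

theorem exists_eventually_const_mul_pow_le_two_rpow (C : ℝ) {r : ℝ} (hr₀ : 0 ≤ r) (hr₁ : r < 1) :
    ∃ β : ℝ, 0 < β ∧ ∀ᶠ n : ℕ in atTop, C * r ^ n ≤ 2 ^ (-(β * n)) := by
  obtain ⟨b, hrb, hb₁⟩ := exists_between hr₁
  have hb₀ : 0 < b := hr₀.trans_lt hrb
  refine ⟨-logb 2 b, neg_pos.2 (logb_neg one_lt_two hb₀ hb₁), ?_⟩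
  filter_upwards [((isLittleO_pow_pow_of_lt_left hr₀ hrb).const_mul_left C).bound one_pos]
    with n hn
  calc C * r ^ n ≤ b ^ n := by
        simpa only [norm_eq_abs, one_mul, abs_of_pos (pow_pos hb₀ n)] using
          (le_abs_self _).trans hn
    _ = 2 ^ (-(-logb 2 b * n)) := by
        rw [neg_mul, neg_neg, rpow_mul two_pos.le, rpow_logb two_pos one_lt_two.ne' hb₀,
          rpow_natCast]

section Secrecy

variable {Q X Z : Type*} [Fintype Q] [Fintype X] [Fintype Z]

theorem sum_codebookProb_iid_mul_dependence_le {pQ : Q → ℝ} {P : Q → X → ℝ} {W : X → Z → ℝ}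
    (hQ : IsPMF pQ) (hP : ∀ q, IsPMF (P q)) (hW : ∀ x, IsPMF (W x)) {I J S : Type*} [Fintype I]
    [Fintype J] [Fintype S] [DecidableEq I] [DecidableEq J] [DecidableEq S] {p₀ : I → ℝ}
    {pc : J → ℝ} {w : S → ℝ} (h₀ : IsPMF p₀) (hc : IsPMF pc) (hw : IsPMF w) {T θ : ℝ}
    (hT : 0 < T) (hθ : 0 ≤ θ) (n : ℕ) :
    ∑ c : (I → Fin n → Q) × (I → J → S → Fin n → X),
        codebookProb (iid pQ n) (prodChannel P) c *
          dependence pc (messageChannel p₀ w (prodChannel W) c.2) ≤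
      2 * (√(T ^ n * ∑ s, w s ^ 2) + 2 * (∑ q, pQ q * ratioMoment (P q) W T θ) ^ n) := by
  have hQn : IsPMF (iid pQ n) := IsPMF.pi fun _ => hQ
  have hPn (q : Fin n → Q) : IsPMF (prodChannel P q) := IsPMF.pi fun t => hP (q t)
  have hWn (x : Fin n → X) : IsPMF (prodChannel W x) := IsPMF.pi fun t => hW (x t)
  refine (sum_codebookProb_mul_dependence_le h₀ hc w hQn hPn (prodChannel W) fun q =>
    outputDist (prodChannel P q) (prodChannel W)).trans (mul_le_mul_of_nonneg_left ?_ two_pos.le)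
  calc ∑ q, iid pQ n q * ∑ f : S → Fin n → X, (∏ s, prodChannel P q (f s)) *
          VD (outputDist w fun s => prodChannel W (f s))
            (outputDist (prodChannel P q) (prodChannel W))
      ≤ ∑ q, iid pQ n q *
          (√(T ^ n * ∑ s, w s ^ 2) + 2 * ratioTail (prodChannel P q) (prodChannel W) (T ^ n)) :=
        sum_le_sum fun q _ => mul_le_mul_of_nonneg_left
          (soft_covering (hPn q) hw hWn (pow_pos hT n).le) (hQn.1 q)
    _ = √(T ^ n * ∑ s, w s ^ 2) +
          2 * ∑ q, iid pQ n q * ratioTail (prodChannel P q) (prodChannel W) (T ^ n) := by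
        simp only [mul_add, sum_add_distrib, ← sum_mul, hQn.2, one_mul, mul_sum, mul_left_comm]
    _ ≤ √(T ^ n * ∑ s, w s ^ 2) + 2 * (∑ q, pQ q * ratioMoment (P q) W T θ) ^ n := by
        gcongr
        exact sum_iid_mul_ratioTail_le hQ.1 (fun q => (hP q).1) (fun x => (hW x).1) hT hθ n

theorem sqrt_two_rpow_pow_mul_le {c h x : ℝ} (n : ℕ) (hx : x ≤ 2 ^ (-(h * n))) :
    √((2 ^ c) ^ n * x) ≤ (2 ^ ((c - h) / 2)) ^ n := by
  refine sqrt_le_iff.2 ⟨by positivity, ?_⟩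
  calc (2 ^ c : ℝ) ^ n * x ≤ (2 ^ c) ^ n * 2 ^ (-(h * n)) := by gcongr
    _ = ((2 ^ ((c - h) / 2)) ^ n) ^ 2 := by
        simp only [← rpow_mul_natCast two_pos.le, ← rpow_add two_pos]
        congr 1
        push_cast
        ring

theorem statement14_general {pQ : Q → ℝ} {P : Q → X → ℝ} {W : X → Z → ℝ} (hQ : IsPMF pQ)
    (hP : ∀ q, IsPMF (P q)) (hW : ∀ x, IsPMF (W x)) {h : ℝ}
    (hh : condMI (markovJoint pQ P W) < h) :
    ∃ β : ℝ, 0 < β ∧ ∀ᶠ n : ℕ in atTop, ∀ {I J S : Type*} [Fintype I] [Fintype J] [Fintype S]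
      [DecidableEq I] [DecidableEq J] [DecidableEq S] {p₀ : I → ℝ} {pc : J → ℝ} {w : S → ℝ},
      IsPMF p₀ → IsPMF pc → IsPMF w → h * n ≤ H2 w →
      ∑ c : (I → Fin n → Q) × (I → J → S → Fin n → X),
        codebookProb (iid pQ n) (prodChannel P) c *
          dependence pc (messageChannel p₀ w (prodChannel W) c.2) ≤ 2 ^ (-(β * n)) := by
  obtain ⟨c, hIc, hch⟩ := exists_between hh
  obtain ⟨θ, hθ, hmoment⟩ := exists_sum_mul_ratioMoment_lt_one hQ hP hW hIc
  set a : ℝ := 2 ^ ((c - h) / 2)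
  set r := ∑ q, pQ q * ratioMoment (P q) W (2 ^ c) θ
  have ha₁ : a < 1 := rpow_lt_one_of_one_lt_of_neg one_lt_two (by linarith)
  have ha₀ : 0 ≤ a := by positivity
  have hr₀ : 0 ≤ r := sum_nonneg fun q _ => mul_nonneg (hQ.1 q)
    (ratioMoment_nonneg (hP q).1 (fun x => (hW x).1) (by positivity) θ)
  obtain ⟨β, hβ, hdecay⟩ := exists_eventually_const_mul_pow_le_two_rpow 6
    (ha₀.trans (le_max_left a r)) (max_lt ha₁ hmoment)
  refine ⟨β, hβ, ?_⟩
  filter_upwards [hdecay] with n hn I J S _ _ _ _ _ _ p₀ pc w h₀ hc hw hH2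
  have hsqrt := sqrt_two_rpow_pow_mul_le (c := c) n (sum_sq_le_rpow_neg_of_le_H2 hw hH2)
  have ha_le : a ^ n ≤ max a r ^ n := pow_le_pow_left₀ ha₀ (le_max_left a r) n
  have hr_le : r ^ n ≤ max a r ^ n := pow_le_pow_left₀ hr₀ (le_max_right a r) n
  have hbound := sum_codebookProb_iid_mul_dependence_le hQ hP hW h₀ hc hw
    (T := 2 ^ c) (by positivity) hθ.le n
  linarith

end Secrecy

/-- Lemma 2: secrecy from random coding with non-uniform
randomization; averaged over the random codebook, the secrecy metric vanishes
exponentially provided `lim (1/n) H₂(M_p) > I(X;Z|Q)`. -/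
theorem statement14
    {Q X Z : Type*} [Fintype Q] [Fintype X] [Fintype Z]
    (pQ : Q → ℝ) (pXgQ : Q → X → ℝ) (W : X → Z → ℝ)
    (hQ : IsPMF pQ) (hXgQ : ∀ q, IsPMF (pXgQ q)) (hW : ∀ x, IsPMF (W x))
    (R0 Rc Rp L : ℝ) (hR0 : 0 < R0) (hRc : 0 < Rc) (hRp : 0 < Rp)
    (pM0 : (n : ℕ) → Fin (e2 (R0 * n)) → ℝ)
    (pMc : (n : ℕ) → Fin (e2 (Rc * n)) → ℝ)
    (pMp : (n : ℕ) → Fin (e2 (Rp * n)) → ℝ)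
    (hM0 : ∀ n, IsPMF (pM0 n)) (hMc : ∀ n, IsPMF (pMc n)) (hMp : ∀ n, IsPMF (pMp n))
    -- `lim (1/n) H₂(M_p) = L`
    (hH2 : Tendsto (fun (n : ℕ) => H2 (pMp n) / n) atTop (nhds L))
    -- `I(X;Z|Q) < lim (1/n) H₂(M_p)`
    (hL : condMI (fun t : Q × X × Z => pQ t.1 * pXgQ t.1 t.2.1 * W t.2.1 t.2.2) < L) :
    ∃ β : ℝ, 0 < β ∧ ∀ᶠ (n : ℕ) in atTop,
      -- expectation over the random codebook `C_n = (Q^n(i), X^n(i,j,s))`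
      (∑ c : (Fin (e2 (R0 * n)) → (Fin n → Q)) ×
             (Fin (e2 (R0 * n)) → Fin (e2 (Rc * n)) → Fin (e2 (Rp * n)) → (Fin n → X)),
        ((∏ i, iid pQ n (c.1 i)) *
          ∏ i, ∏ j, ∏ s, ∏ t : Fin n, pXgQ (c.1 i t) (c.2 i j s t)) *
        -- `V(p_{M_c Z^n}, p_{M_c} p_{Z^n})` for the code `c`
        (∑ j : Fin (e2 (Rc * n)), ∑ z : Fin n → Z,
          |pMc n j * (∑ i, pM0 n i * ∑ s, pMp n s * ∏ t : Fin n, W (c.2 i j s t) (z t))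
            - pMc n j * (∑ j' : Fin (e2 (Rc * n)), pMc n j' *
                (∑ i, pM0 n i * ∑ s, pMp n s * ∏ t : Fin n, W (c.2 i j' s t) (z t)))|))
      ≤ (2:ℝ) ^ (-(β * n)) := by
  obtain ⟨h, hIh, hhL⟩ := exists_between hL
  obtain ⟨β, hβ, hbound⟩ := statement14_general hQ hXgQ hW hIh
  refine ⟨β, hβ, ?_⟩
  filter_upwards [hbound, hH2.eventually_const_lt hhL, eventually_gt_atTop 0] with n hn hrate hpos
  exact hn (hM0 n) (hMc n) (hMp n) ((lt_div_iff₀ (Nat.cast_pos.2 hpos)).1 hrate).le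
end
end

section
/- Let (X, p_X) be a DMS on a finite alphabet X, let μ_X = min_{x ∈ supp(p_X)} p_X(x), and fix ε₁ > 0, R > 0, d_n ∈ ℕ, M_n = 2^{nR}. Let Φ : X^n × {1,…,2^{d_n}} → {1,…,M_n} be a uniformly random function (i.e., the values Φ(x^n, u) are i.i.d. uniform on {1,…,M_n} over all pairs (x^n, u)), and let U_{d_n} be uniform on {1,…,2^{d_n}} and independent of X^n and Φ. Then the expected uniformity metric satisfies E_Φ[ V(p_{Φ(X^n, U_{d_n})}, uniform on {1,…,M_n}) ] ≤ 4|X| e^{−n ε₁² μ_X} + 2^{(n/2)(R − (1 − 3ε₁) H(X) − d_n/n)}. -/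
open Finset Filter Real

attribute [local instance] Classical.propDecidable

noncomputable section

/-!
Averaged over a uniformly random `Φ`, the values `Φ z` are pairwise independent, so each output
weight `∑ z, w z * 1[Φ z = m]` has variance at most `(∑ z, w z ^ 2) / M`. By Cauchy–Schwarz the
output is therefore within `√(M * ∑ z, w z ^ 2)` of uniform on average. The input weights are split
into their restrictions to the sequences in which no letter occurs too rarely and to the remaining
ones. On the former, `iid p n x ≤ 2 ^ (-n (1 - δ) H(X))`, which bounds the sum of squares. The
latter have exponentially small mass by a Chernoff bound, and contribute at most twice that mass.
-/

open scoped BigOperators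

section RandomFunction

variable {Ω β K : Type*} [Fintype Ω] [DecidableEq Ω] [Fintype β] [Semifield K] [CharZero K]

theorem expect_prod_apply (f : Ω → β → K) :
    𝔼 Φ : Ω → β, ∏ z, f z (Φ z) = ∏ z, 𝔼 b, f z b := by
  simp only [Fintype.expect_eq_sum_div_card, prod_div_distrib, Fintype.prod_sum, prod_const,
    card_univ, Fintype.card_fun, Nat.cast_pow]

theorem expect_apply [Nonempty β] (g : β → K) (z : Ω) :
    𝔼 Φ : Ω → β, g (Φ z) = 𝔼 b, g b := by
  have factor (i : Ω) :
      𝔼 b, (if i = z then g b else 1) = if i = z then 𝔼 b, g b else 1 := by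
    split_ifs <;> simp
  simpa [factor] using expect_prod_apply (β := β) fun i b => if i = z then g b else 1

theorem expect_apply_mul_apply [Nonempty β] (g h : β → K) {z z' : Ω} (hz : z ≠ z') :
    𝔼 Φ : Ω → β, g (Φ z) * h (Φ z') = (𝔼 b, g b) * 𝔼 b, h b := by
  have factor (i : Ω) :
      𝔼 b, ((if i = z then g b else 1) * if i = z' then h b else 1)
        = (if i = z then 𝔼 b, g b else 1) * if i = z' then 𝔼 b, h b else 1 := by
    by_cases hi : i = z
    · simp [hi, hz]
    · by_cases hi' : i = z'
      · subst hi'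
        simp [hi]
      · simp [hi, hi']
  have product := expect_prod_apply (β := β)
    fun i b => (if i = z then g b else 1) * if i = z' then h b else 1
  simpa only [factor, prod_mul_distrib, Fintype.prod_ite_eq'] using product

theorem expect_sq_sum_mul_apply [Nonempty β] (w : Ω → K) {g : β → K} (hg : 𝔼 b, g b = 0) :
    𝔼 Φ : Ω → β, (∑ z, w z * g (Φ z)) ^ 2 = (∑ z, w z ^ 2) * 𝔼 b, g b ^ 2 := by
  have correlation (z z' : Ω) :
      𝔼 Φ : Ω → β, g (Φ z) * g (Φ z') = if z = z' then 𝔼 b, g b ^ 2 else 0 := by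
    split_ifs with hz
    · simp only [← hz, ← sq]
      exact expect_apply (fun b => g b ^ 2) z
    · rw [expect_apply_mul_apply g g hz, hg, zero_mul]
  calc 𝔼 Φ : Ω → β, (∑ z, w z * g (Φ z)) ^ 2
      = ∑ z, ∑ z', w z * w z' * 𝔼 Φ : Ω → β, g (Φ z) * g (Φ z') := by
        simp only [sq, sum_mul_sum, mul_mul_mul_comm, expect_sum_comm, mul_expect]
    _ = (∑ z, w z ^ 2) * 𝔼 b, g b ^ 2 := by
        simp [correlation, sum_mul, sq]

end RandomFunction

theorem expect_abs_le_sqrt_expect_sq {ι : Type*} [Fintype ι] (f : ι → ℝ) :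
    𝔼 i, |f i| ≤ √(𝔼 i, f i ^ 2) := by
  cases isEmpty_or_nonempty ι
  · simp
  · apply Real.le_sqrt_of_sq_le
    simpa using expect_mul_sq_le_sq_mul_sq univ (fun i => |f i|) fun _ => 1

theorem expect_sq_balance_le {ι : Type*} [Fintype ι] (f : ι → ℝ) :
    𝔼 i, Fintype.balance f i ^ 2 ≤ 𝔼 i, f i ^ 2 := by
  cases isEmpty_or_nonempty ι
  · simp
  · have expand : 𝔼 i, Fintype.balance f i ^ 2 = 𝔼 i, f i ^ 2 - (𝔼 i, f i) ^ 2 := by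
      simp only [Fintype.balance_apply, sub_sq, expect_add_distrib, expect_sub_distrib,
        ← expect_mul, ← mul_expect, Fintype.expect_const]
      ring
    linarith [sq_nonneg (𝔼 i, f i)]

section Uniformity

variable {Ω β : Type*} [Fintype Ω] [Fintype β]

/-- Variational distance between the image of the weights `w` under `f` and the uniform weights of
the same total mass. The weights need not sum to `1`, so that a distribution can be cut into pieces
that are estimated separately. -/
def uniformityMetric (w : Ω → ℝ) (f : Ω → β) : ℝ :=
  VD (push w f) fun _ => (∑ z, w z) / Fintype.card β

theorem sum_push (w : Ω → ℝ) (f : Ω → β) : ∑ b, push w f b = ∑ z, w z := by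
  simp only [push]
  rw [sum_comm]
  simp

theorem push_add (v w : Ω → ℝ) (f : Ω → β) : push (v + w) f = push v f + push w f := by
  ext b
  simp only [push, Pi.add_apply, ← sum_add_distrib, ite_add_ite, add_zero]

theorem uniformityMetric_add_le (v w : Ω → ℝ) (f : Ω → β) :
    uniformityMetric (v + w) f ≤ uniformityMetric v f + uniformityMetric w f := by
  simp only [uniformityMetric, VD, ← sum_add_distrib]
  gcongr with b
  simp only [push_add, Pi.add_apply, sum_add_distrib, add_div, add_sub_add_comm]
  exact abs_add_le _ _

theorem uniformityMetric_le_two_mul_sum [Nonempty β] {w : Ω → ℝ} (hw : 0 ≤ w) (f : Ω → β) :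
    uniformityMetric w f ≤ 2 * ∑ z, w z := by
  have push_nonneg (b : β) : 0 ≤ push w f b :=
    sum_nonneg fun z _ => ite_nonneg (hw z) le_rfl
  have mass_nonneg : 0 ≤ ∑ z, w z := sum_nonneg fun z _ => hw z
  calc uniformityMetric w f
      ≤ ∑ b, (push w f b + (∑ z, w z) / Fintype.card β) := by
        unfold uniformityMetric VD
        gcongr with b
        refine (abs_sub _ _).trans_eq ?_
        rw [abs_of_nonneg (push_nonneg b), abs_of_nonneg (by positivity)]
    _ = 2 * ∑ z, w z := by
        rw [sum_add_distrib, sum_push, sum_const, card_univ, nsmul_eq_mul]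
        field_simp
        ring

theorem push_sub_uniform_eq (w : Ω → ℝ) (f : Ω → β) (b : β) :
    push w f b - (∑ z, w z) / Fintype.card β
      = ∑ z, w z * Fintype.balance (Pi.single b 1) (f z) := by
  simp [push, Fintype.balance_apply, mul_sub, sum_mul,
    Pi.single_apply, div_eq_mul_inv]

theorem expect_abs_push_sub_uniform_le [DecidableEq Ω] [Nonempty β] (w : Ω → ℝ) (b : β) :
    𝔼 Φ : Ω → β, |push w Φ b - (∑ z, w z) / Fintype.card β|
      ≤ √((∑ z, w z ^ 2) / Fintype.card β) := by
  have variance_le : 𝔼 c, Fintype.balance (Pi.single b (1 : ℝ)) c ^ 2 ≤ 1 / Fintype.card β := by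
    refine (expect_sq_balance_le _).trans_eq ?_
    simp [Pi.single_apply]
  refine (expect_abs_le_sqrt_expect_sq _).trans (Real.sqrt_le_sqrt ?_)
  simp only [push_sub_uniform_eq]
  rw [expect_sq_sum_mul_apply w (Fintype.expect_balance _), ← mul_one_div]
  gcongr

theorem expect_uniformityMetric_le [DecidableEq Ω] [Nonempty β] (w : Ω → ℝ) :
    𝔼 Φ : Ω → β, uniformityMetric w Φ ≤ √(Fintype.card β * ∑ z, w z ^ 2) := by
  calc 𝔼 Φ : Ω → β, uniformityMetric w Φ
      = ∑ b, 𝔼 Φ : Ω → β, |push w Φ b - (∑ z, w z) / Fintype.card β| := expect_sum_comm _ _ _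
    _ ≤ ∑ _b : β, √((∑ z, w z ^ 2) / Fintype.card β) := by
        gcongr with b
        exact expect_abs_push_sub_uniform_le w b
    _ = √((Fintype.card β : ℝ) ^ 2 * ((∑ z, w z ^ 2) / Fintype.card β)) := by
        rw [sum_const, card_univ, nsmul_eq_mul, Real.sqrt_mul (by positivity),
          Real.sqrt_sq (by positivity)]
    _ = √(Fintype.card β * ∑ z, w z ^ 2) := by
        congr 1
        field_simp

theorem expect_uniformityMetric_add_le [DecidableEq Ω] [Nonempty β] (v : Ω → ℝ) {w : Ω → ℝ}
    (hw : 0 ≤ w) :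
    𝔼 Φ : Ω → β, uniformityMetric (v + w) Φ
      ≤ √(Fintype.card β * ∑ z, v z ^ 2) + 2 * ∑ z, w z := by
  calc 𝔼 Φ : Ω → β, uniformityMetric (v + w) Φ
      ≤ 𝔼 Φ : Ω → β, (uniformityMetric v Φ + 2 * ∑ z, w z) := by
        gcongr with Φ
        refine (uniformityMetric_add_le v w Φ).trans ?_
        gcongr
        exact uniformityMetric_le_two_mul_sum hw Φ
    _ ≤ √(Fintype.card β * ∑ z, v z ^ 2) + 2 * ∑ z, w z := by
        rw [expect_add_distrib, Fintype.expect_const]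
        gcongr
        exact expect_uniformityMetric_le v

/-- The joint weights of a source with weights `p` and an independent seed, uniform on `U`. -/
def withSeed {α : Type*} (U : Type*) [Fintype U] (p : α → ℝ) : α × U → ℝ :=
  fun z => p z.1 / Fintype.card U

variable {α U : Type*} [Fintype α] [Fintype U]

theorem sum_withSeed [Nonempty U] (p : α → ℝ) : ∑ z, withSeed U p z = ∑ x, p x := by
  simp only [withSeed, Fintype.sum_prod_type, sum_const, card_univ, nsmul_eq_mul]
  field_simp

theorem sum_withSeed_sq (p : α → ℝ) :
    ∑ z, withSeed U p z ^ 2 = (∑ x, p x ^ 2) / Fintype.card U := by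
  simp only [withSeed, Fintype.sum_prod_type, sum_const, card_univ, nsmul_eq_mul, sum_div]
  field_simp

theorem uniformityMetric_withSeed_eq_VD [DecidableEq β] [Nonempty U] {p : α → ℝ} (hp : IsPMF p)
    (f : α × U → β) :
    uniformityMetric (withSeed U p) f
      = VD (fun b => ∑ x, ∑ u, p x * (1 / Fintype.card U) * if f (x, u) = b then 1 else 0)
        fun _ => 1 / Fintype.card β := by
  rw [uniformityMetric, sum_withSeed, hp.2]
  simp [VD, push, withSeed, Fintype.sum_prod_type, div_eq_mul_inv]

theorem expect_uniformityMetric_withSeed_le [DecidableEq α] [DecidableEq U] [Nonempty β]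
    [Nonempty U] {p : α → ℝ} (hp : IsPMF p) (A : Finset α) {q : ℝ} (hq₀ : 0 ≤ q)
    (hq : ∀ x ∈ A, p x ≤ q) :
    𝔼 Φ : α × U → β, uniformityMetric (withSeed U p) Φ
      ≤ √(Fintype.card β / Fintype.card U * q) + 2 * ∑ x ∈ Aᶜ, p x := by
  set v : α → ℝ := fun x => if x ∈ A then p x else 0 with hv
  set w : α → ℝ := fun x => if x ∈ A then 0 else p x with hw
  have split : withSeed U p = withSeed U v + withSeed U w := by
    ext z
    by_cases hz : z.1 ∈ A <;> simp [withSeed, hv, hw, hz]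
  have w_nonneg : 0 ≤ withSeed U w := fun z =>
    div_nonneg (ite_nonneg le_rfl (hp.1 z.1)) (Nat.cast_nonneg _)
  have sum_w : ∑ x, w x = ∑ x ∈ Aᶜ, p x := by
    simp [hw, sum_ite, filter_not, compl_eq_univ_sdiff]
  have sum_v_sq : ∑ x, v x ^ 2 ≤ q := by
    calc ∑ x, v x ^ 2 = ∑ x ∈ A, p x * p x := by simp [hv, sq]
      _ ≤ ∑ x ∈ A, p x * q := by gcongr with x hx; exacts [hp.1 x, hq x hx]
      _ ≤ (∑ x, p x) * q := by
        rw [← sum_mul]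
        gcongr
        exacts [fun x _ _ => hp.1 x, subset_univ A]
      _ = q := by rw [hp.2, one_mul]
  calc 𝔼 Φ : α × U → β, uniformityMetric (withSeed U p) Φ
      ≤ √(Fintype.card β * ((∑ x, v x ^ 2) / Fintype.card U)) + 2 * ∑ x ∈ Aᶜ, p x := by
        rw [split]
        simpa only [sum_withSeed_sq, sum_withSeed, sum_w] using
          expect_uniformityMetric_add_le (β := β) (withSeed U v) w_nonneg
    _ ≤ √(Fintype.card β / Fintype.card U * q) + 2 * ∑ x ∈ Aᶜ, p x := by
        rw [mul_div_assoc', ← div_mul_eq_mul_div]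
        gcongr

end Uniformity

theorem exp_neg_le_one_sub_add_sq_div_two {t : ℝ} (ht : 0 ≤ t) :
    Real.exp (-t) ≤ 1 - t + t ^ 2 / 2 := by
  have exp_lower : 1 + t + t ^ 2 / 2 ≤ Real.exp t := Real.quadratic_le_exp_of_nonneg ht
  have factor_pos : 0 < 1 - t + t ^ 2 / 2 := by nlinarith [sq_nonneg (t - 1)]
  rw [Real.exp_neg, inv_le_iff_one_le_mul₀ (Real.exp_pos t)]
  calc 1 ≤ 1 + t ^ 4 / 4 := by linarith [pow_nonneg ht 4]
    _ = (1 - t + t ^ 2 / 2) * (1 + t + t ^ 2 / 2) := by ring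
    _ ≤ (1 - t + t ^ 2 / 2) * Real.exp t := by gcongr

theorem sum_biUnion_le_sum_of_nonneg {ι κ N : Type*} [DecidableEq κ] [AddCommMonoid N]
    [PartialOrder N] [IsOrderedAddMonoid N] (s : Finset ι) (t : ι → Finset κ) {f : κ → N}
    (hf : 0 ≤ f) : ∑ x ∈ s.biUnion t, f x ≤ ∑ i ∈ s, ∑ x ∈ t i, f x := by
  induction s using Finset.induction_on with
  | empty => simp
  | insert i s hi ih =>
    rw [biUnion_insert, sum_insert hi]
    calc ∑ x ∈ t i ∪ s.biUnion t, f x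
        ≤ ∑ x ∈ t i ∪ s.biUnion t, f x + ∑ x ∈ t i ∩ s.biUnion t, f x :=
          le_add_of_nonneg_right (sum_nonneg fun x _ => hf x)
      _ = ∑ x ∈ t i, f x + ∑ x ∈ s.biUnion t, f x := sum_union_inter
      _ ≤ ∑ x ∈ t i, f x + ∑ j ∈ s, ∑ x ∈ t j, f x := by gcongr

section Source

variable {X : Type*} [Fintype X] {p : X → ℝ}

theorem IsPMF.le_one (hp : IsPMF p) (a : X) : p a ≤ 1 :=
  hp.2 ▸ single_le_sum (fun b _ => hp.1 b) (mem_univ a)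

theorem sum_iid_mul_prod (p : X → ℝ) (n : ℕ) (f : X → ℝ) :
    ∑ x, iid p n x * ∏ i, f (x i) = (∑ a, p a * f a) ^ n := by
  simp only [Fintype.sum_pow, iid, prod_mul_distrib]

theorem IsPMF.iid (hp : IsPMF p) (n : ℕ) : IsPMF (iid p n) where
  left _ := prod_nonneg fun _ _ => hp.1 _
  right := by simpa [hp.2] using sum_iid_mul_prod p n 1

theorem sum_iid_mul_exp_neg_count_le (hp : IsPMF p) (n : ℕ) (a : X) {t : ℝ} (ht : 0 ≤ t) :
    ∑ x, iid p n x * Real.exp (-t * #{i | x i = a})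
      ≤ Real.exp (n * (p a * (-t + t ^ 2 / 2))) := by
  have exp_count (x : Fin n → X) : Real.exp (-t * #{i | x i = a})
      = ∏ i, if x i = a then Real.exp (-t) else 1 := by
    rw [prod_ite, prod_const, prod_const_one, mul_one, ← Real.exp_nat_mul, mul_comm]
  have letter_mgf : ∑ b, p b * (if b = a then Real.exp (-t) else 1)
      = 1 + p a * (Real.exp (-t) - 1) := by
    have peel (b : X) : p b * (if b = a then Real.exp (-t) else 1)
        = p b + if b = a then p a * (Real.exp (-t) - 1) else 0 := by
      split_ifs with hb
      · rw [hb]; ring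
      · ring
    simp [peel, sum_add_distrib, hp.2]
  have letter_mgf_nonneg : 0 ≤ 1 + p a * (Real.exp (-t) - 1) := by
    nlinarith [hp.le_one a, mul_nonneg (hp.1 a) (Real.exp_pos (-t)).le]
  have letter_mgf_le : 1 + p a * (Real.exp (-t) - 1) ≤ Real.exp (p a * (-t + t ^ 2 / 2)) := by
    calc 1 + p a * (Real.exp (-t) - 1) ≤ p a * (-t + t ^ 2 / 2) + 1 := by
          nlinarith [mul_le_mul_of_nonneg_left (exp_neg_le_one_sub_add_sq_div_two ht) (hp.1 a)]
      _ ≤ Real.exp (p a * (-t + t ^ 2 / 2)) := Real.add_one_le_exp _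
  simp only [exp_count, sum_iid_mul_prod p n fun b => if b = a then Real.exp (-t) else 1,
    letter_mgf, Real.exp_nat_mul]
  gcongr

theorem sum_iid_filter_count_lt_le (hp : IsPMF p) (n : ℕ) (a : X) {δ : ℝ} (hδ : 0 ≤ δ) :
    ∑ x with (#{i | x i = a} : ℝ) < (1 - δ) * (n * p a), iid p n x
      ≤ Real.exp (-(n * δ ^ 2 * p a / 2)) := by
  set c := (1 - δ) * (n * p a)
  have iid_nonneg := (hp.iid n).1
  calc ∑ x with (#{i | x i = a} : ℝ) < c, iid p n x
      ≤ ∑ x with (#{i | x i = a} : ℝ) < c,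
          Real.exp (δ * c) * (iid p n x * Real.exp (-δ * #{i | x i = a})) := by
        refine sum_le_sum fun x hx => ?_
        have count_lt := (mem_filter.mp hx).2
        rw [mul_left_comm, ← Real.exp_add]
        refine le_mul_of_one_le_right (iid_nonneg x) (Real.one_le_exp ?_)
        nlinarith
    _ ≤ Real.exp (δ * c) * ∑ x, iid p n x * Real.exp (-δ * #{i | x i = a}) := by
        rw [mul_sum]
        refine sum_le_sum_of_subset_of_nonneg (filter_subset _ _) fun x _ _ => ?_
        have := iid_nonneg x
        positivity
    _ ≤ Real.exp (δ * c) * Real.exp (n * (p a * (-δ + δ ^ 2 / 2))) := by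
        gcongr
        exact sum_iid_mul_exp_neg_count_le hp n a hδ
    _ = Real.exp (-(n * δ ^ 2 * p a / 2)) := by
        rw [← Real.exp_add]
        congr 1
        simp only [c]
        ring

/-- The sequences of length `n` in which every letter `a` occurs at least `(1 - δ) n p(a)` times.
This is the lower half of the condition defining `typ`, and the only half needed to bound the
probability of a sequence from above. -/
def lowerTyp (p : X → ℝ) (n : ℕ) (δ : ℝ) : Finset (Fin n → X) :=
  {x | ∀ a, (1 - δ) * (n * p a) ≤ #{i | x i = a}}

theorem iid_le_of_mem_lowerTyp (hp : IsPMF p) {n : ℕ} {δ : ℝ} {x : Fin n → X}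
    (hx : x ∈ lowerTyp p n δ) : iid p n x ≤ 2 ^ (-(n * ((1 - δ) * Hsh p))) := by
  have count_ge (a : X) : (1 - δ) * (n * p a) ≤ #{i | x i = a} := (mem_filter.mp hx).2 a
  by_cases hzero : ∃ i, p (x i) = 0
  · obtain ⟨i, hi⟩ := hzero
    rw [iid, prod_eq_zero (mem_univ i) hi]
    positivity
  push Not at hzero
  have iid_pos : 0 < iid p n x := prod_pos fun i _ => (hp.1 _).lt_of_ne' (hzero i)
  rw [← Real.logb_le_iff_le_rpow one_lt_two iid_pos]
  calc Real.logb 2 (iid p n x) = ∑ i, Real.logb 2 (p (x i)) :=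
        Real.logb_prod _ _ fun i _ => hzero i
    _ = ∑ a, #{i | x i = a} * Real.logb 2 (p a) := by
        simp [← sum_fiberwise' univ x fun a => Real.logb 2 (p a)]
    _ ≤ ∑ a, (1 - δ) * (n * p a) * Real.logb 2 (p a) := by
        refine sum_le_sum fun a _ => mul_le_mul_of_nonpos_right (count_ge a) ?_
        exact Real.logb_nonpos one_lt_two (hp.1 a) (hp.le_one a)
    _ = -(n * ((1 - δ) * Hsh p)) := by
        simp only [Hsh, mul_assoc, ← mul_sum]
        ring

theorem sum_iid_compl_lowerTyp_le (hp : IsPMF p) (n : ℕ) {δ μ : ℝ} (hδ : 0 ≤ δ)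
    (hμ : ∀ a, 0 < p a → μ ≤ p a) :
    ∑ x ∈ (lowerTyp p n δ)ᶜ, iid p n x
      ≤ Fintype.card X * Real.exp (-(n * δ ^ 2 * μ / 2)) := by
  have letter_le (a : X) : ∑ x with (#{i | x i = a} : ℝ) < (1 - δ) * (n * p a), iid p n x
      ≤ Real.exp (-(n * δ ^ 2 * μ / 2)) := by
    rcases (hp.1 a).eq_or_lt with ha | ha
    · simp [← ha, (Nat.cast_nonneg _).not_gt, Real.exp_nonneg]
    · refine (sum_iid_filter_count_lt_le hp n a hδ).trans ?_
      gcongr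
      exact hμ a ha
  have compl_eq : (lowerTyp p n δ)ᶜ
      = univ.biUnion fun a => {x | (#{i | x i = a} : ℝ) < (1 - δ) * (n * p a)} := by
    ext x
    simp [lowerTyp]
  calc ∑ x ∈ (lowerTyp p n δ)ᶜ, iid p n x
      ≤ ∑ a, ∑ x with (#{i | x i = a} : ℝ) < (1 - δ) * (n * p a), iid p n x := by
        rw [compl_eq]
        exact sum_biUnion_le_sum_of_nonneg _ _ (hp.iid n).1
    _ ≤ ∑ _a : X, Real.exp (-(n * δ ^ 2 * μ / 2)) := by
        gcongr with a
        exact letter_le a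
    _ = Fintype.card X * Real.exp (-(n * δ ^ 2 * μ / 2)) := by
        rw [sum_const, card_univ, nsmul_eq_mul]

theorem expect_uniformityMetric_iid_withSeed_le {U β : Type*} [Fintype U] [DecidableEq U]
    [Nonempty U] [Fintype β] [Nonempty β] (hp : IsPMF p) (n : ℕ) {δ μ : ℝ} (hδ : 0 ≤ δ)
    (hμ : ∀ a, 0 < p a → μ ≤ p a) :
    𝔼 Φ : (Fin n → X) × U → β, uniformityMetric (withSeed U (iid p n)) Φ
      ≤ √(Fintype.card β / Fintype.card U * 2 ^ (-(n * ((1 - δ) * Hsh p))))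
        + 2 * (Fintype.card X * Real.exp (-(n * δ ^ 2 * μ / 2))) := by
  refine (expect_uniformityMetric_withSeed_le (hp.iid n) (lowerTyp p n δ) (by positivity)
    fun x hx => iid_le_of_mem_lowerTyp hp hx).trans ?_
  gcongr
  exact sum_iid_compl_lowerTyp_le hp n hδ hμ

end Source

theorem sqrt_two_rpow_div_mul {n : ℝ} (hn : n ≠ 0) (R r h : ℝ) :
    √((2 : ℝ) ^ (n * R) / 2 ^ r * 2 ^ (-(n * h))) = 2 ^ (n / 2 * (R - h - r / n)) := by
  rw [← Real.rpow_sub two_pos, ← Real.rpow_add two_pos, Real.sqrt_eq_rpow,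
    ← Real.rpow_mul two_pos.le]
  congr 1
  field_simp
  ring

/-- expected uniformity of the output of a uniformly random binning
encoder. -/
theorem statement15 {X : Type*} [Fintype X] (pX : X → ℝ) (hX : IsPMF pX)
    (μ : ℝ) (hμ : μ = sInf {r : ℝ | ∃ x, 0 < pX x ∧ r = pX x})
    (ε₁ R : ℝ) (hε₁ : 0 < ε₁) (hR : 0 < R)
    (n d M : ℕ) (hn : 1 ≤ n)
    -- `M_n = 2^{nR}`
    (hM : (M : ℝ) = (2:ℝ) ^ ((n : ℝ) * R)) :
    -- expectation over the uniformly random function `Φ`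
    (1 / (Fintype.card (((Fin n → X) × Fin (2 ^ d)) → Fin M) : ℝ)) *
      ∑ Φ : ((Fin n → X) × Fin (2 ^ d)) → Fin M,
        VD (fun m : Fin M =>
              ∑ x : Fin n → X, ∑ u : Fin (2 ^ d),
                iid pX n x * (1 / (2:ℝ) ^ d) * (if Φ (x, u) = m then 1 else 0))
           (fun _ => 1 / (M : ℝ))
      ≤ 4 * (Fintype.card X : ℝ) * Real.exp (-((n : ℝ) * ε₁ ^ 2 * μ))
        + (2:ℝ) ^ (((n : ℝ) / 2) * (R - (1 - 3 * ε₁) * Hsh pX - (d : ℝ) / n)) := by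
  have hμ_le (a : X) (ha : 0 < pX a) : μ ≤ pX a :=
    hμ ▸ csInf_le ⟨0, by rintro r ⟨x, hx, rfl⟩; exact hx.le⟩ ⟨a, ha, rfl⟩
  have hμ_nonneg : 0 ≤ μ := hμ ▸ Real.sInf_nonneg (by rintro r ⟨x, hx, rfl⟩; exact hx.le)
  have hM_pos : (0 : ℝ) < M := by rw [hM]; positivity
  have : NeZero M := ⟨by exact_mod_cast hM_pos.ne'⟩
  have bound := expect_uniformityMetric_iid_withSeed_le (U := Fin (2 ^ d)) (β := Fin M) hX n
    (mul_pos three_pos hε₁).le hμ_le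
  simp only [Fintype.expect_eq_sum_div_card, uniformityMetric_withSeed_eq_VD (hX.iid n),
    Fintype.card_fin, Nat.cast_pow, Nat.cast_ofNat] at bound
  have sqrt_eq := sqrt_two_rpow_div_mul (n := n) (by positivity) R d ((1 - 3 * ε₁) * Hsh pX)
  rw [← hM, Real.rpow_natCast] at sqrt_eq
  have exp_le : Real.exp (-(n * (3 * ε₁) ^ 2 * μ / 2)) ≤ Real.exp (-(n * ε₁ ^ 2 * μ)) := by
    gcongr
    nlinarith [show 0 ≤ n * ε₁ ^ 2 * μ by positivity]
  rw [one_div_mul_eq_div]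
  calc _ ≤ _ := bound
    _ ≤ (2 : ℝ) ^ ((n : ℝ) / 2 * (R - (1 - 3 * ε₁) * Hsh pX - d / n))
          + 4 * (Fintype.card X * Real.exp (-(n * ε₁ ^ 2 * μ))) := by
        rw [sqrt_eq]
        gcongr
        norm_num
    _ = _ := by ring
end
end
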